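/- arXiv:2209.03658 — 3 statements merged into one kernel-verified Lean document; each statement's English description precedes it below -/
import Mathlib

section
/- Let V : ℝ → ℝ be Borel measurable, locally integrable and nonnegative almost everywhere. Then the map R ↦ λ_V({x ∈ ℝ : |x| ≥ R}) is monotonically nondecreasing and continuous on (0, ∞), and its supremum over R > 0 (equivalently, its limit as R → ∞) equals Σ_V. (This is the paper's Lemma 3.3 for the metric graph G = H = ℝ with the ball B_R(0) = [−R, R].) -/
open MeasureTheory Set Filter Topology
open scoped ENNReal

/-- Rayleigh quotient of a test function `f` for the Schrödinger form with potential `V`. -/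
noncomputable def rayleigh (V : ℝ → ℝ) (f : ℝ → ℝ) : ℝ :=
  (∫ x, ((deriv f x) ^ 2 + V x * (f x) ^ 2)) / (∫ x, (f x) ^ 2)

/-- `f` is an admissible test function for the closed set `S`: continuously differentiable,
not identically zero, with compact support contained in `S`. -/
def TestFor (S : Set ℝ) (f : ℝ → ℝ) : Prop :=
  ContDiff ℝ 1 f ∧ f ≠ 0 ∧ HasCompactSupport f ∧ tsupport f ⊆ S

/-- Dirichlet ground state energy `λ_V(S)`, with `sInf ∅ = ∞`. -/
noncomputable def lambdaV (V : ℝ → ℝ) (S : Set ℝ) : ℝ≥0∞ :=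
  sInf {e : ℝ≥0∞ | ∃ f : ℝ → ℝ, TestFor S f ∧ e = ENNReal.ofReal (rayleigh V f)}

/-- `Σ_V`, the infimum of the essential spectrum of `-d²/dx² + V` on `ℝ`, characterized
Persson-style as `sup_{R>0} λ_V({|x| ≥ R})`. -/
noncomputable def SigmaV (V : ℝ → ℝ) : ℝ≥0∞ :=
  ⨆ R : ℝ, ⨆ _ : 0 < R, lambdaV V {x : ℝ | R ≤ |x|}

/-- A `k`-partition of `ℝ`: `k` closed connected subsets with nonempty interior whose
pairwise intersections are contained in both frontiers. -/
def IsPartitionR (k : ℕ) (G : Fin k → Set ℝ) : Prop :=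
  (∀ i, IsClosed (G i)) ∧ (∀ i, IsConnected (G i)) ∧
    (∀ i, (interior (G i)).Nonempty) ∧
    ∀ i j, i ≠ j → G i ∩ G j ⊆ frontier (G i) ∩ frontier (G j)

/-- The energy `Δ(P)` of a partition: the maximum of the ground state energies. -/
noncomputable def energyR (V : ℝ → ℝ) {k : ℕ} (G : Fin k → Set ℝ) : ℝ≥0∞ :=
  ⨆ i, lambdaV V (G i)

/-- The infimal `k`-partition energy `Δ*_k(ℝ)`. -/
noncomputable def optEnergyR (V : ℝ → ℝ) (k : ℕ) : ℝ≥0∞ :=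
  ⨅ G : {G : Fin k → Set ℝ // IsPartitionR k G}, energyR V G.1

/-! Push a test function supported in `{r ≤ |x|}` into `{s ≤ |x|}`, for `r < s` close together,
by composing it with a `C¹` diffeomorphism `ψ` of `ℝ` that is the dilation by `r / s` near the
origin and the identity outside a fixed compact set. The change of variables raises the kinetic
energy and lowers the `L²` norm at most by factors close to `1`. The potential energy changes only
on the compact set, where `|f(ψ x) - f x|² ≤ |ψ x - x| ∫ f'²`; since `f 0 = 0`, the same inequality
bounds `f²` there, so the potential energy grows at most by a small multiple of `∫ f'²`, uniformly
in `f`. Hence `λ_V({s ≤ |x|}) ≤ q λ_V({r ≤ |x|})` with `q` close to `1`, which together with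
monotonicity gives continuity. -/

lemma exists_one_lt_mul_lt_of_lt {a b : ℝ≥0∞} (hab : a < b) : ∃ q : ℝ≥0∞, 1 < q ∧ q * a < b := by
  have hlim : Tendsto (fun q : ℝ≥0∞ => q * a) (𝓝[>] 1) (𝓝 a) := by
    simpa using (ENNReal.Tendsto.mul_const tendsto_id (Or.inl one_ne_zero)).mono_left
      (nhdsWithin_le_nhds (a := 1) (s := Ioi 1))
  exact ((eventually_mem_nhdsWithin (s := Ioi 1)).and (hlim.eventually_lt_const hab)).exists

lemma continuousAt_of_monotone_of_forall_le_mul {α : Type*} [LinearOrder α] [TopologicalSpace α]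
    [OrderTopology α] {φ : α → ℝ≥0∞} {a : α} (hφ : Monotone φ)
    (h : ∀ q : ℝ≥0∞, 1 < q → ∃ r < a, ∃ s > a, φ s ≤ q * φ r) : ContinuousAt φ a := by
  refine tendsto_order.2 ⟨fun y hy => ?_, fun y hy => ?_⟩
  · obtain ⟨q, hq, hqy⟩ := exists_one_lt_mul_lt_of_lt hy
    obtain ⟨r, hr, s, hs, hsr⟩ := h q hq
    have hyr : y < φ r := lt_of_mul_lt_mul_left' (hqy.trans_le ((hφ hs.le).trans hsr))
    filter_upwards [eventually_gt_nhds hr] with x hx using hyr.trans_le (hφ hx.le)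
  · obtain ⟨q, hq, hqy⟩ := exists_one_lt_mul_lt_of_lt hy
    obtain ⟨r, hr, s, hs, hsr⟩ := h q hq
    have hsy : φ s < y := (hsr.trans (by gcongr; exact hφ hr.le)).trans_lt hqy
    filter_upwards [eventually_lt_nhds hs] with x hx using (hφ hx.le).trans_lt hsy

section SquareIntegrableDerivative

lemma sq_integral_le_measureReal_mul_integral_sq {α : Type*} [MeasurableSpace α] {μ : Measure α}
    [IsFiniteMeasure μ] {g : α → ℝ} (hg : MemLp g 2 μ) :
    (∫ x, g x ∂μ) ^ 2 ≤ μ.real univ * ∫ x, g x ^ 2 ∂μ := by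
  rcases eq_or_ne μ 0 with rfl | hμ
  · simp
  have : NeZero μ := ⟨hμ⟩
  have hpos : 0 < μ.real univ := measureReal_univ_pos
  have jensen : (⨍ x, g x ∂μ) ^ 2 ≤ ⨍ x, g x ^ 2 ∂μ :=
    (even_two.convexOn_pow (𝕜 := ℝ)).map_average_le (by fun_prop) isClosed_univ (by simp)
      (hg.integrable one_le_two) hg.integrable_sq
  rw [average_eq, average_eq, smul_eq_mul, smul_eq_mul, mul_pow] at jensen
  calc (∫ x, g x ∂μ) ^ 2
      = μ.real univ ^ 2 * ((μ.real univ)⁻¹ ^ 2 * (∫ x, g x ∂μ) ^ 2) := by field_simp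
    _ ≤ μ.real univ ^ 2 * ((μ.real univ)⁻¹ * ∫ x, g x ^ 2 ∂μ) := by gcongr
    _ = μ.real univ * ∫ x, g x ^ 2 ∂μ := by field_simp

variable {f : ℝ → ℝ}

lemma sq_sub_le_abs_mul_integral_deriv_sq (hf : Differentiable ℝ f) (hf' : MemLp (deriv f) 2)
    (a b : ℝ) : (f b - f a) ^ 2 ≤ |b - a| * ∫ x, deriv f x ^ 2 := by
  have : IsFiniteMeasure (volume.restrict (uIoc a b)) :=
    Real.isFiniteMeasure_restrict_Ioc _ _
  have hmem : MemLp (deriv f) 2 (volume.restrict (uIoc a b)) := hf'.restrict _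
  have hint : IntervalIntegrable (deriv f) volume a b :=
    intervalIntegrable_iff.2 (hmem.integrable one_le_two)
  calc (f b - f a) ^ 2 = (∫ x in uIoc a b, deriv f x) ^ 2 := by
        rw [← intervalIntegral.integral_deriv_eq_sub (fun x _ => hf x) hint,
          sq_eq_sq_iff_abs_eq_abs]
        exact intervalIntegral.abs_integral_eq_abs_integral_uIoc _
    _ ≤ |b - a| * ∫ x in uIoc a b, deriv f x ^ 2 := by
        simpa [Measure.real] using sq_integral_le_measureReal_mul_integral_sq hmem
    _ ≤ |b - a| * ∫ x, deriv f x ^ 2 := by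
        gcongr
        · exact ae_of_all _ fun x => sq_nonneg _
        · exact hf'.integrable_sq
        · exact Measure.restrict_le_self

lemma sq_le_sq_add_mul_integral_deriv_sq (hf : Differentiable ℝ f) (hf' : MemLp (deriv f) 2)
    (hf0 : f 0 = 0) {c δ x y : ℝ} (hx : |x| ≤ c) (hxy : |y - x| ≤ δ) :
    f y ^ 2 ≤ f x ^ 2 + (δ + 2 * √(c * δ)) * ∫ x, deriv f x ^ 2 := by
  set A := ∫ x, deriv f x ^ 2
  have hA : 0 ≤ A := integral_nonneg fun x => sq_nonneg _
  have hc : 0 ≤ c := (abs_nonneg x).trans hx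
  have hδ : 0 ≤ δ := (abs_nonneg _).trans hxy
  have increment : (f y - f x) ^ 2 ≤ δ * A :=
    (sq_sub_le_abs_mul_integral_deriv_sq hf hf' x y).trans (by gcongr)
  have size : f x ^ 2 ≤ c * A := by
    have h := sq_sub_le_abs_mul_integral_deriv_sq hf hf' 0 x
    rw [hf0, sub_zero, sub_zero] at h
    exact h.trans (by gcongr)
  have cross : f x * (f y - f x) ≤ √(c * δ) * A := by
    have h : (f x * (f y - f x)) ^ 2 ≤ (c * δ) * A ^ 2 := by
      calc (f x * (f y - f x)) ^ 2 = f x ^ 2 * (f y - f x) ^ 2 := mul_pow _ _ _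
        _ ≤ (c * A) * (δ * A) := by gcongr
        _ = (c * δ) * A ^ 2 := by ring
    have h' := Real.le_sqrt_of_sq_le h
    rwa [Real.sqrt_mul (by positivity), Real.sqrt_sq hA] at h'
  calc f y ^ 2 = f x ^ 2 + (f y - f x) ^ 2 + 2 * (f x * (f y - f x)) := by ring
    _ ≤ f x ^ 2 + δ * A + 2 * (√(c * δ) * A) := by gcongr
    _ = f x ^ 2 + (δ + 2 * √(c * δ)) * A := by ring

end SquareIntegrableDerivative

section CompactlySupported

lemma memLp_deriv_of_contDiff_of_hasCompactSupport {F : Type*} [NormedAddCommGroup F]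
    [NormedSpace ℝ F] {μ : Measure ℝ} [IsFiniteMeasureOnCompacts μ] {f : ℝ → F}
    (hf : ContDiff ℝ 1 f) (hfc : HasCompactSupport f) (p : ℝ≥0∞) : MemLp (deriv f) p μ :=
  (hf.continuous_deriv le_rfl).memLp_of_hasCompactSupport hfc.deriv

variable {V f : ℝ → ℝ}

lemma integrable_mul_sq_of_hasCompactSupport (hV : LocallyIntegrable V) (hf : Continuous f)
    (hfc : HasCompactSupport f) : Integrable fun x => V x * f x ^ 2 := by
  have hfc2 : HasCompactSupport fun x => f x ^ 2 := hfc.comp_left (g := (· ^ 2)) (by simp)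
  simpa [mul_comm] using hV.integrable_smul_left_of_hasCompactSupport (hf.pow 2) hfc2

lemma rayleigh_eq_add_div (hV : LocallyIntegrable V) (hf : ContDiff ℝ 1 f)
    (hfc : HasCompactSupport f) :
    rayleigh V f = ((∫ x, deriv f x ^ 2) + ∫ x, V x * f x ^ 2) / ∫ x, f x ^ 2 := by
  rw [rayleigh, integral_add
    (memLp_deriv_of_contDiff_of_hasCompactSupport hf hfc 2).integrable_sq
    (integrable_mul_sq_of_hasCompactSupport hV hf.continuous hfc)]

lemma integral_sq_pos_of_hasCompactSupport (hf : Continuous f) (hfc : HasCompactSupport f)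
    (hf0 : f ≠ 0) : 0 < ∫ x, f x ^ 2 := by
  obtain ⟨x, hx⟩ := Function.ne_iff.1 hf0
  have hsq : Continuous fun x => f x ^ 2 := hf.pow 2
  have hsqc : HasCompactSupport fun x => f x ^ 2 := hfc.comp_left (g := (· ^ 2)) (by simp)
  exact hsq.integral_pos_of_hasCompactSupport_nonneg_nonzero hsqc (fun x => sq_nonneg _)
    (pow_ne_zero 2 hx)

end CompactlySupported

/-- Orientation-preserving `C¹` diffeomorphisms `ψ` of the line that move points by at most `δ`,
only move points of `[-c, c]`, and stretch lengths by a factor at most `L`; test functions are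
transplanted by composing with them. Surjectivity is not a field, as it follows from `eq_self`. -/
structure IsLocalDeformation (ψ : ℝ → ℝ) (c δ L : ℝ) : Prop where
  contDiff : ContDiff ℝ 1 ψ
  deriv_pos : ∀ x, 0 < deriv ψ x
  deriv_le : ∀ x, deriv ψ x ≤ L
  abs_sub_le : ∀ x, |ψ x - x| ≤ δ
  eq_self : ∀ x, c < |x| → ψ x = x

namespace IsLocalDeformation

variable {ψ f V : ℝ → ℝ} {c δ L : ℝ}

lemma hasDerivAt (hψ : IsLocalDeformation ψ c δ L) (x : ℝ) : HasDerivAt ψ (deriv ψ x) x :=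
  (hψ.contDiff.differentiable one_ne_zero x).hasDerivAt

lemma surjective (hψ : IsLocalDeformation ψ c δ L) : Function.Surjective ψ := by
  refine hψ.contDiff.continuous.surjective ?_ ?_
  · refine tendsto_id.congr' ?_
    filter_upwards [eventually_gt_atTop c] with x hx
    exact (hψ.eq_self x (hx.trans_le (le_abs_self x))).symm
  · refine tendsto_id.congr' ?_
    filter_upwards [eventually_lt_atBot (-c)] with x hx
    exact (hψ.eq_self x ((lt_neg.1 hx).trans_le (neg_le_abs x))).symm

lemma comp_ne_zero (hψ : IsLocalDeformation ψ c δ L) (hf : f ≠ 0) : f ∘ ψ ≠ 0 :=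
  fun h => hf (hψ.surjective.injective_comp_right h)

lemma one_le (hψ : IsLocalDeformation ψ c δ L) : 1 ≤ L := by
  have hlt : c < |(|c| + 1)| := by
    rw [abs_of_pos (by positivity)]
    linarith [le_abs_self c]
  have heq : ψ =ᶠ[𝓝 (|c| + 1)] id :=
    (continuous_abs.continuousAt.eventually_const_lt hlt).mono hψ.eq_self
  simpa [heq.deriv_eq] using hψ.deriv_le (|c| + 1)

lemma delta_nonneg (hψ : IsLocalDeformation ψ c δ L) : 0 ≤ δ :=
  (abs_nonneg _).trans (hψ.abs_sub_le 0)

lemma hasCompactSupport_comp (hψ : IsLocalDeformation ψ c δ L) (hf : HasCompactSupport f) :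
    HasCompactSupport (f ∘ ψ) := by
  refine HasCompactSupport.intro ((isCompact_Icc (a := -c) (b := c)).union hf.isCompact) ?_
  intro x hx
  rw [mem_union, not_or, mem_Icc, ← abs_le, not_le] at hx
  rw [Function.comp_apply, hψ.eq_self x hx.1, image_eq_zero_of_notMem_tsupport hx.2]

lemma integral_eq_integral_deriv_mul_comp (hψ : IsLocalDeformation ψ c δ L) (F : ℝ → ℝ) :
    ∫ x, F x = ∫ x, deriv ψ x * F (ψ x) := by
  have h := integral_image_eq_integral_abs_deriv_smul (s := univ) MeasurableSet.univ
    (fun x _ => (hψ.hasDerivAt x).hasDerivWithinAt)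
    (strictMono_of_deriv_pos hψ.deriv_pos).injective.injOn F
  simpa [image_univ, hψ.surjective.range_eq, abs_of_pos (hψ.deriv_pos _)] using h

lemma integral_le_mul_integral_comp (hψ : IsLocalDeformation ψ c δ L) {F : ℝ → ℝ}
    (hF : ∀ x, 0 ≤ F x) (hFψ : Integrable (F ∘ ψ)) : ∫ x, F x ≤ L * ∫ x, F (ψ x) := by
  rw [hψ.integral_eq_integral_deriv_mul_comp, ← integral_const_mul]
  exact integral_mono_of_nonneg (ae_of_all _ fun x => mul_nonneg (hψ.deriv_pos x).le (hF _))
    (hFψ.const_mul L) (ae_of_all _ fun x => mul_le_mul_of_nonneg_right (hψ.deriv_le x) (hF _))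

lemma integral_deriv_comp_sq_le (hψ : IsLocalDeformation ψ c δ L) (hf : ContDiff ℝ 1 f)
    (hfc : HasCompactSupport f) :
    ∫ x, deriv (f ∘ ψ) x ^ 2 ≤ L * ∫ x, deriv f x ^ 2 := by
  have hψ' : Continuous (deriv ψ) := hψ.contDiff.continuous_deriv le_rfl
  have hf' : Continuous (deriv f) := hf.continuous_deriv le_rfl
  have hψf' : Continuous fun x => deriv f (ψ x) := hf'.comp hψ.contDiff.continuous
  have hsupp : HasCompactSupport fun x => deriv ψ x * deriv f (ψ x) ^ 2 :=
    ((hψ.hasCompactSupport_comp hfc.deriv).comp_left (g := (· ^ 2)) (by simp)).mul_left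
  have hint : Integrable fun x => deriv ψ x * deriv f (ψ x) ^ 2 :=
    (hψ'.mul (hψf'.pow 2)).integrable_of_hasCompactSupport hsupp
  rw [hψ.integral_eq_integral_deriv_mul_comp fun x => deriv f x ^ 2, ← integral_const_mul]
  refine integral_mono_of_nonneg (ae_of_all _ fun x => sq_nonneg _) (hint.const_mul L)
    (ae_of_all _ fun x => ?_)
  have hψ'x := (hψ.deriv_pos x).le
  calc deriv (f ∘ ψ) x ^ 2 = deriv ψ x * (deriv ψ x * deriv f (ψ x) ^ 2) := by
        rw [deriv_comp x (hf.differentiable one_ne_zero _) (hψ.hasDerivAt x).differentiableAt]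
        ring
    _ ≤ L * (deriv ψ x * deriv f (ψ x) ^ 2) := by
        gcongr
        exact hψ.deriv_le x

lemma integral_mul_comp_sq_le (hψ : IsLocalDeformation ψ c δ L) (hV : LocallyIntegrable V)
    (hV0 : ∀ᵐ x, 0 ≤ V x) (hf : ContDiff ℝ 1 f) (hfc : HasCompactSupport f) (hf0 : f 0 = 0) :
    ∫ x, V x * (f ∘ ψ) x ^ 2 ≤ (∫ x, V x * f x ^ 2) +
      (∫ x in Icc (-c) c, V x) * ((δ + 2 * √(c * δ)) * ∫ x, deriv f x ^ 2) := by
  set E := (δ + 2 * √(c * δ)) * ∫ x, deriv f x ^ 2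
  have hVf : Integrable fun x => V x * f x ^ 2 :=
    integrable_mul_sq_of_hasCompactSupport hV hf.continuous hfc
  have hVψ : Integrable fun x => V x * (f ∘ ψ) x ^ 2 :=
    integrable_mul_sq_of_hasCompactSupport hV (hf.continuous.comp hψ.contDiff.continuous)
      (hψ.hasCompactSupport_comp hfc)
  have hVE : Integrable fun x => (Icc (-c) c).indicator V x * E :=
    ((hV.integrableOn_isCompact isCompact_Icc).integrable_indicator measurableSet_Icc).mul_const _
  rw [← integral_indicator measurableSet_Icc, ← integral_mul_const, ← integral_add hVf hVE]
  refine integral_mono_ae hVψ (hVf.add hVE) ?_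
  filter_upwards [hV0] with x hx
  by_cases hxc : |x| ≤ c
  · have hfψ : (f ∘ ψ) x ^ 2 ≤ f x ^ 2 + E :=
      sq_le_sq_add_mul_integral_deriv_sq (hf.differentiable one_ne_zero)
        (memLp_deriv_of_contDiff_of_hasCompactSupport hf hfc 2) hf0 hxc (hψ.abs_sub_le x)
    rw [indicator_of_mem (mem_Icc.2 (abs_le.1 hxc)), ← mul_add]
    gcongr
  · rw [indicator_of_notMem (mt (fun hmem => abs_le.2 (mem_Icc.1 hmem)) hxc), zero_mul, add_zero,
      Function.comp_apply, hψ.eq_self x (not_le.1 hxc)]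

lemma energy_comp_le (hψ : IsLocalDeformation ψ c δ L) (hV : LocallyIntegrable V)
    (hV0 : ∀ᵐ x, 0 ≤ V x) (hf : ContDiff ℝ 1 f) (hfc : HasCompactSupport f) (hf0 : f 0 = 0) :
    (∫ x, deriv (f ∘ ψ) x ^ 2) + ∫ x, V x * (f ∘ ψ) x ^ 2 ≤
      (L + (∫ x in Icc (-c) c, V x) * (δ + 2 * √(c * δ))) *
        ((∫ x, deriv f x ^ 2) + ∫ x, V x * f x ^ 2) := by
  have kinetic := hψ.integral_deriv_comp_sq_le hf hfc
  have potential := hψ.integral_mul_comp_sq_le hV hV0 hf hfc hf0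
  have hB : 0 ≤ ∫ x, V x * f x ^ 2 :=
    integral_nonneg_of_ae (hV0.mono fun x hx => mul_nonneg hx (sq_nonneg _))
  have hM : 0 ≤ ∫ x in Icc (-c) c, V x := integral_nonneg_of_ae (ae_restrict_of_ae hV0)
  have hδ := hψ.delta_nonneg
  have hL := hψ.one_le
  set A := ∫ x, deriv f x ^ 2
  set B := ∫ x, V x * f x ^ 2
  set κ := (∫ x in Icc (-c) c, V x) * (δ + 2 * √(c * δ))
  have hκ : 0 ≤ κ := by positivity
  calc (∫ x, deriv (f ∘ ψ) x ^ 2) + ∫ x, V x * (f ∘ ψ) x ^ 2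
      ≤ L * A + (B + κ * A) := add_le_add kinetic (potential.trans_eq (by ring))
    _ ≤ L * A + (L * B + κ * A) + κ * B := by nlinarith
    _ = (L + κ) * (A + B) := by ring

lemma rayleigh_comp_le (hψ : IsLocalDeformation ψ c δ L) (hV : LocallyIntegrable V)
    (hV0 : ∀ᵐ x, 0 ≤ V x) (hf : ContDiff ℝ 1 f) (hfc : HasCompactSupport f) (hf0 : f 0 = 0)
    (hne : f ≠ 0) :
    rayleigh V (f ∘ ψ) ≤
      L * (L + (∫ x in Icc (-c) c, V x) * (δ + 2 * √(c * δ))) * rayleigh V f := by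
  have hg : ContDiff ℝ 1 (f ∘ ψ) := hf.comp hψ.contDiff
  have hgc : HasCompactSupport (f ∘ ψ) := hψ.hasCompactSupport_comp hfc
  have energy := hψ.energy_comp_le hV hV0 hf hfc hf0
  have mass : ∫ x, f x ^ 2 ≤ L * ∫ x, (f ∘ ψ) x ^ 2 :=
    hψ.integral_le_mul_integral_comp (fun x => sq_nonneg (f x))
      (hg.continuous.memLp_of_hasCompactSupport hgc).integrable_sq
  have hN := integral_sq_pos_of_hasCompactSupport hf.continuous hfc hne
  have hE' : 0 ≤ (∫ x, deriv (f ∘ ψ) x ^ 2) + ∫ x, V x * (f ∘ ψ) x ^ 2 :=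
    add_nonneg (integral_nonneg fun x => sq_nonneg _)
      (integral_nonneg_of_ae (hV0.mono fun x hx => mul_nonneg hx (sq_nonneg _)))
  rw [rayleigh_eq_add_div hV hg hgc, rayleigh_eq_add_div hV hf hfc]
  set E := (∫ x, deriv f x ^ 2) + ∫ x, V x * f x ^ 2
  set E' := (∫ x, deriv (f ∘ ψ) x ^ 2) + ∫ x, V x * (f ∘ ψ) x ^ 2
  set w := L + (∫ x in Icc (-c) c, V x) * (δ + 2 * √(c * δ))
  set N := ∫ x, f x ^ 2
  set N' := ∫ x, (f ∘ ψ) x ^ 2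
  have hL : 0 < L := one_pos.trans_le hψ.one_le
  calc E' / N' = L * E' / (L * N') := (mul_div_mul_left _ _ hL.ne').symm
    _ ≤ L * E' / N := by gcongr
    _ ≤ L * (w * E) / N := by gcongr
    _ = L * w * (E / N) := by ring

lemma testFor_comp (hψ : IsLocalDeformation ψ c δ L) {S T : Set ℝ} (hST : ψ ⁻¹' T ⊆ S)
    (hf : TestFor T f) : TestFor S (f ∘ ψ) := by
  obtain ⟨hf1, hne, hfc, hfT⟩ := hf
  exact ⟨hf1.comp hψ.contDiff, hψ.comp_ne_zero hne,
    hψ.hasCompactSupport_comp hfc,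
    (tsupport_comp_subset_preimage f hψ.contDiff.continuous).trans
      ((preimage_mono hfT).trans hST)⟩

end IsLocalDeformation

lemma isLocalDeformation_sub_mul {η : ℝ → ℝ} {c C K t : ℝ} (hη : ContDiff ℝ 1 η)
    (hC : ∀ x, |η x| ≤ C) (hK : ∀ x, |deriv η x| ≤ K) (hc : ∀ x, c < |x| → η x = 0)
    (ht : 0 ≤ t) (htK : t * K < 1) :
    IsLocalDeformation (fun x => x - t * η x) c (t * C) (1 + t * K) := by
  have hderiv (x : ℝ) : deriv (fun x => x - t * η x) x = 1 - t * deriv η x :=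
    ((hasDerivAt_id x).sub
      ((hη.differentiable one_ne_zero x).hasDerivAt.const_mul t)).deriv
  have htη (x : ℝ) : |t * deriv η x| ≤ t * K := by
    rw [abs_mul, abs_of_nonneg ht]
    gcongr
    exact hK x
  refine ⟨by fun_prop, fun x => ?_, fun x => ?_, fun x => ?_, fun x hx => by simp [hc x hx]⟩
  · rw [hderiv]
    linarith [le_abs_self (t * deriv η x), htη x]
  · rw [hderiv]
    linarith [neg_abs_le (t * deriv η x), htη x]
  · rw [sub_sub_cancel_left, abs_neg, abs_mul, abs_of_nonneg ht]
    gcongr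
    exact hC x

lemma exists_isLocalDeformation_eq_mul {b : ℝ} (hb : 0 < b) :
    ∃ c C K : ℝ, ∀ t : ℝ, 0 ≤ t → t * K < 1 →
      ∃ ψ : ℝ → ℝ, IsLocalDeformation ψ c (t * C) (1 + t * K) ∧
        ∀ x, |x| ≤ b → ψ x = (1 - t) * x := by
  let β : ContDiffBump (0 : ℝ) := ⟨b, b + 1, hb, by linarith⟩
  let η : ℝ → ℝ := fun x => x * β x
  have hη : ContDiff ℝ 1 η := contDiff_id.mul β.contDiff
  have hηc : HasCompactSupport η := β.hasCompactSupport.mul_left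
  obtain ⟨C, hC⟩ := hηc.exists_bound_of_continuous hη.continuous
  obtain ⟨K, hK⟩ := hηc.deriv.exists_bound_of_continuous (hη.continuous_deriv le_rfl)
  have hη_eq_zero (x : ℝ) (hx : b + 1 < |x|) : η x = 0 := by
    have hβ : β x = 0 := β.zero_of_le_dist (by simpa [β] using hx.le)
    simp [η, hβ]
  refine ⟨b + 1, C, K, fun t ht htK => ⟨fun x => x - t * η x,
    isLocalDeformation_sub_mul hη hC hK hη_eq_zero ht htK, fun x hx => ?_⟩⟩
  have hβ : β x = 1 := β.one_of_mem_closedBall (by simpa [β] using hx)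
  simp only [η, hβ]
  ring

section GroundStateEnergy

variable {V f : ℝ → ℝ} {S T : Set ℝ}

lemma lambdaV_le_ofReal_rayleigh (hf : TestFor S f) :
    lambdaV V S ≤ ENNReal.ofReal (rayleigh V f) :=
  sInf_le ⟨f, hf, rfl⟩

lemma lambdaV_antitone (V : ℝ → ℝ) : Antitone (lambdaV V) := by
  refine fun S T hST => le_sInf ?_
  rintro _ ⟨f, ⟨hf, hne, hfc, hfS⟩, rfl⟩
  exact lambdaV_le_ofReal_rayleigh ⟨hf, hne, hfc, hfS.trans hST⟩

lemma lambdaV_exterior_monotone (V : ℝ → ℝ) :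
    Monotone fun R : ℝ => lambdaV V {x : ℝ | R ≤ |x|} :=
  fun _ _ hrs => lambdaV_antitone V fun _ hx => hrs.trans hx

lemma lambdaV_le_ofReal_mul {w : ℝ} (hw : 0 < w)
    (h : ∀ f, TestFor T f → ∃ g, TestFor S g ∧ rayleigh V g ≤ w * rayleigh V f) :
    lambdaV V S ≤ ENNReal.ofReal w * lambdaV V T := by
  rw [← ENNReal.div_le_iff' (by simpa using hw) ENNReal.ofReal_ne_top]
  refine le_sInf ?_
  rintro _ ⟨f, hf, rfl⟩
  obtain ⟨g, hg, hgf⟩ := h f hf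
  rw [ENNReal.div_le_iff' (by simpa using hw) ENNReal.ofReal_ne_top, ← ENNReal.ofReal_mul hw.le]
  exact (lambdaV_le_ofReal_rayleigh hg).trans (ENNReal.ofReal_le_ofReal hgf)

lemma lambdaV_le_mul_of_isLocalDeformation {ψ : ℝ → ℝ} {c δ L : ℝ}
    (hψ : IsLocalDeformation ψ c δ L) (hV : LocallyIntegrable V) (hV0 : ∀ᵐ x, 0 ≤ V x)
    (hT : 0 ∉ T) (hST : ψ ⁻¹' T ⊆ S) :
    lambdaV V S ≤ ENNReal.ofReal
      (L * (L + (∫ x in Icc (-c) c, V x) * (δ + 2 * √(c * δ)))) * lambdaV V T := by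
  have hL := hψ.one_le
  have hδ := hψ.delta_nonneg
  have hM : 0 ≤ ∫ x in Icc (-c) c, V x := integral_nonneg_of_ae (ae_restrict_of_ae hV0)
  refine lambdaV_le_ofReal_mul (by positivity) fun f hf => ⟨f ∘ ψ, hψ.testFor_comp hST hf, ?_⟩
  obtain ⟨hf1, hne, hfc, hfT⟩ := hf
  have hf0 : f 0 = 0 := image_eq_zero_of_notMem_tsupport fun h => hT (hfT h)
  exact hψ.rayleigh_comp_le hV hV0 hf1 hfc hf0 hne

lemma exists_lambdaV_exterior_le_mul (hV : LocallyIntegrable V) (hV0 : ∀ᵐ x, 0 ≤ V x)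
    {R : ℝ} (hR : 0 < R) {q : ℝ≥0∞} (hq : 1 < q) :
    ∃ r < R, ∃ s > R, lambdaV V {x : ℝ | s ≤ |x|} ≤ q * lambdaV V {x : ℝ | r ≤ |x|} := by
  obtain ⟨c, C, K, hψ⟩ := exists_isLocalDeformation_eq_mul (b := 2 * R) (by positivity)
  let w : ℝ → ℝ := fun t =>
    (1 + t * K) * (1 + t * K + (∫ x in Icc (-c) c, V x) * (t * C + 2 * √(c * (t * C))))
  have hw : Tendsto (fun t => ENNReal.ofReal (w t)) (𝓝 0) (𝓝 1) :=
    (ENNReal.continuous_ofReal.comp (by fun_prop : Continuous w)).tendsto' 0 1 (by simp [w])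
  have hK : Tendsto (fun t : ℝ => t * K) (𝓝 0) (𝓝 0) :=
    (continuous_mul_const K).tendsto' 0 0 (zero_mul K)
  obtain ⟨t, ht : 0 < t, hwq, htK, ht1⟩ :=
    ((eventually_mem_nhdsWithin (a := (0 : ℝ)) (s := Ioi 0)).and <| nhdsWithin_le_nhds <|
      (hw.eventually_lt_const hq).and <| (hK.eventually_lt_const one_pos).and <|
        eventually_lt_nhds one_pos).exists
  obtain ⟨ψ, hψ, hψ_eq⟩ := hψ t ht.le htK
  refine ⟨(1 - t) * ((1 + t) * R), by nlinarith [mul_pos (mul_pos ht ht) hR], (1 + t) * R,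
    by nlinarith, ?_⟩
  have hr : 0 < (1 - t) * ((1 + t) * R) := mul_pos (sub_pos.2 ht1) (by positivity)
  refine (lambdaV_le_mul_of_isLocalDeformation hψ hV hV0 (by simpa using hr) ?_).trans
    (mul_le_mul_left hwq.le _)
  intro x (hx : (1 - t) * ((1 + t) * R) ≤ |ψ x|)
  by_contra! hxs
  have hxs : |x| < (1 + t) * R := not_le.1 hxs
  rw [hψ_eq x (hxs.le.trans (by nlinarith)), abs_mul, abs_of_pos (sub_pos.2 ht1)] at hx
  exact hx.not_gt (mul_lt_mul_of_pos_left hxs (sub_pos.2 ht1))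

lemma SigmaV_eq_iSup (V : ℝ → ℝ) : SigmaV V = ⨆ R : ℝ, lambdaV V {x : ℝ | R ≤ |x|} :=
  le_antisymm (iSup_mono fun _ => iSup_le fun _ => le_rfl) <| iSup_le fun R =>
    (lambdaV_exterior_monotone V (le_max_left R 1)).trans <|
      le_iSup₂_of_le (max R 1) (lt_max_of_lt_right one_pos) le_rfl

end GroundStateEnergy

/-- **Lemma 3.3 for `G = H = ℝ`.** The map `R ↦ λ_V({|x| ≥ R})` is monotonically
nondecreasing and continuous on `(0,∞)`, and its supremum over `R > 0`, equivalently its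
limit as `R → ∞`, equals `Σ_V`. -/
theorem lambda_exterior_monotone_continuous (V : ℝ → ℝ) (hmeas : Measurable V)
    (hloc : LocallyIntegrable V) (hpos : ∀ᵐ x ∂(volume : Measure ℝ), 0 ≤ V x) :
    MonotoneOn (fun R : ℝ => lambdaV V {x : ℝ | R ≤ |x|}) (Set.Ioi 0) ∧
    ContinuousOn (fun R : ℝ => lambdaV V {x : ℝ | R ≤ |x|}) (Set.Ioi 0) ∧
    (⨆ R : ℝ, ⨆ _ : 0 < R, lambdaV V {x : ℝ | R ≤ |x|}) = SigmaV V ∧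
    Tendsto (fun R : ℝ => lambdaV V {x : ℝ | R ≤ |x|}) atTop (𝓝 (SigmaV V)) := by
  have hmono := lambdaV_exterior_monotone V
  refine ⟨hmono.monotoneOn _, fun R hR => ?_, rfl, ?_⟩
  · exact (continuousAt_of_monotone_of_forall_le_mul hmono fun q hq =>
      exists_lambdaV_exterior_le_mul hloc hpos hR hq).continuousWithinAt
  · rw [SigmaV_eq_iSup]
    exact tendsto_atTop_iSup hmono
end

section
/- (Density of compactly supported functions in the weighted Sobolev space H¹(ℝ; V).) Let V : ℝ → ℝ be Borel measurable, locally integrable and nonnegative almost everywhere. Let u : ℝ → ℝ be continuously differentiable with ∫_ℝ ( u'(x)² + (1 + V(x))·u(x)² ) dx < ∞. Then for every ε > 0 there exists a continuously differentiable function w : ℝ → ℝ with compact support such that ∫_ℝ ( (u − w)'(x)² + (1 + V(x))·(u(x) − w(x))² ) dx < ε. -/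
open MeasureTheory Set Filter Topology
open scoped ENNReal

/-!
Multiply `u` by smooth cutoffs `φₙ` that equal `1` on the ball of radius `n` and satisfy
`‖φₙ'‖ ≤ 1 / (n + 1)`. The error is `ψₙ u` with `ψₙ = 1 - φₙ`, and since the weight is at least
`c > 0`, the product rule bounds its density by `2 ^ p (|ψₙ| ^ p + ‖ψₙ'‖ ^ p / c)` times that of
`u`. This factor is bounded and tends to `0` pointwise, so dominated convergence applies.
-/

section

open scoped ContDiff

variable {E F : Type*} [NormedAddCommGroup E] [NormedSpace ℝ E]
  [NormedAddCommGroup F] [NormedSpace ℝ F]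

/-- The integrand of the `p`-th power of the weighted Sobolev norm `W^{1,p}(E; W)`. The weight `W`
multiplies only the zeroth-order term, so `W = 1 + V` and `p = 2` give the norm of `H¹(E; V)`. -/
noncomputable def sobolevDensity (p : ℝ) (W : E → ℝ) (u : E → F) (x : E) : ℝ :=
  ‖fderiv ℝ u x‖ ^ p + W x * ‖u x‖ ^ p

lemma sobolevDensity_nonneg {p : ℝ} {W : E → ℝ} {x : E} (hW : 0 ≤ W x) (u : E → F) :
    0 ≤ sobolevDensity p W u x := by
  unfold sobolevDensity
  positivity

lemma sobolevDensity_two_real (W f : ℝ → ℝ) (x : ℝ) :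
    sobolevDensity 2 W f x = deriv f x ^ 2 + W x * f x ^ 2 := by
  simp only [sobolevDensity, ← norm_deriv_eq_norm_fderiv, Real.rpow_ofNat, Real.norm_eq_abs,
    sq_abs]

lemma norm_fderiv_smul_le {ψ : E → ℝ} {u : E → F} {x : E} (hψ : DifferentiableAt ℝ ψ x)
    (hu : DifferentiableAt ℝ u x) :
    ‖fderiv ℝ (ψ • u) x‖ ≤ |ψ x| * ‖fderiv ℝ u x‖ + ‖fderiv ℝ ψ x‖ * ‖u x‖ := by
  rw [fderiv_smul hψ hu]
  refine (norm_add_le _ _).trans_eq ?_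
  rw [norm_smul, ContinuousLinearMap.norm_smulRight_apply, Real.norm_eq_abs]

lemma add_rpow_le_two_rpow_mul {a b p : ℝ} (ha : 0 ≤ a) (hb : 0 ≤ b) (hp : 0 ≤ p) :
    (a + b) ^ p ≤ 2 ^ p * (a ^ p + b ^ p) := by
  have hmax : max a b ^ p ≤ a ^ p + b ^ p := by
    rcases max_choice a b with h | h <;> rw [h]
    · exact le_add_of_nonneg_right (by positivity)
    · exact le_add_of_nonneg_left (by positivity)
  calc (a + b) ^ p
    _ ≤ (2 * max a b) ^ p := by
      gcongr
      linarith [le_max_left a b, le_max_right a b]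
    _ = 2 ^ p * max a b ^ p := Real.mul_rpow zero_le_two (le_max_of_le_left ha)
    _ ≤ 2 ^ p * (a ^ p + b ^ p) := by gcongr

lemma norm_fderiv_smul_rpow_le {p : ℝ} (hp : 0 ≤ p) {ψ : E → ℝ} {u : E → F} {x : E}
    (hψ : DifferentiableAt ℝ ψ x) (hu : DifferentiableAt ℝ u x) :
    ‖fderiv ℝ (ψ • u) x‖ ^ p ≤
      2 ^ p * (|ψ x| ^ p * ‖fderiv ℝ u x‖ ^ p + ‖fderiv ℝ ψ x‖ ^ p * ‖u x‖ ^ p) :=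
  calc ‖fderiv ℝ (ψ • u) x‖ ^ p
    _ ≤ (|ψ x| * ‖fderiv ℝ u x‖ + ‖fderiv ℝ ψ x‖ * ‖u x‖) ^ p := by
      gcongr
      exact norm_fderiv_smul_le hψ hu
    _ ≤ 2 ^ p * ((|ψ x| * ‖fderiv ℝ u x‖) ^ p + (‖fderiv ℝ ψ x‖ * ‖u x‖) ^ p) :=
      add_rpow_le_two_rpow_mul (by positivity) (by positivity) hp
    _ = _ := by rw [Real.mul_rpow, Real.mul_rpow] <;> positivity

lemma sobolevDensity_smul_le {p c : ℝ} (hp : 0 ≤ p) (hc : 0 < c) {W ψ : E → ℝ} {u : E → F} {x : E}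
    (hW : c ≤ W x) (hψ : DifferentiableAt ℝ ψ x) (hu : DifferentiableAt ℝ u x) :
    sobolevDensity p W (ψ • u) x ≤
      2 ^ p * (|ψ x| ^ p + ‖fderiv ℝ ψ x‖ ^ p / c) * sobolevDensity p W u x := by
  have hW₀ : 0 ≤ W x := hc.le.trans hW
  have hzero : W x * ‖(ψ • u) x‖ ^ p ≤ 2 ^ p * (|ψ x| ^ p * (W x * ‖u x‖ ^ p)) := by
    rw [Pi.smul_apply', norm_smul, Real.norm_eq_abs, Real.mul_rpow (abs_nonneg _) (norm_nonneg _),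
      mul_left_comm]
    exact le_mul_of_one_le_left (by positivity) (Real.one_le_rpow one_le_two hp)
  have hu_le : ‖u x‖ ^ p ≤ sobolevDensity p W u x / c := by
    rw [le_div_iff₀' hc]
    calc c * ‖u x‖ ^ p ≤ W x * ‖u x‖ ^ p := by gcongr
      _ ≤ sobolevDensity p W u x := le_add_of_nonneg_left (by positivity)
  calc sobolevDensity p W (ψ • u) x
    _ ≤ 2 ^ p * (|ψ x| ^ p * sobolevDensity p W u x + ‖fderiv ℝ ψ x‖ ^ p * ‖u x‖ ^ p) :=
      (add_le_add (norm_fderiv_smul_rpow_le hp hψ hu) hzero).trans_eq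
        (by unfold sobolevDensity; ring)
    _ ≤ 2 ^ p * (|ψ x| ^ p * sobolevDensity p W u x +
        ‖fderiv ℝ ψ x‖ ^ p * (sobolevDensity p W u x / c)) := by gcongr
    _ = _ := by ring

lemma norm_sobolevDensity_smul_le_of_bound {p c A B : ℝ} (hp : 0 ≤ p) (hc : 0 < c)
    {W ψ : E → ℝ} {u : E → F} {x : E} (hW : c ≤ W x) (hψ : DifferentiableAt ℝ ψ x)
    (hu : DifferentiableAt ℝ u x) (hψA : |ψ x| ≤ A) (hψB : ‖fderiv ℝ ψ x‖ ≤ B) :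
    ‖sobolevDensity p W (ψ • u) x‖ ≤
      2 ^ p * (A ^ p + B ^ p / c) * sobolevDensity p W u x := by
  have hnonneg (v : E → F) : 0 ≤ sobolevDensity p W v x := sobolevDensity_nonneg (hc.le.trans hW) v
  rw [Real.norm_of_nonneg (hnonneg _)]
  refine (sobolevDensity_smul_le hp hc hW hψ hu).trans ?_
  gcongr
  exact hnonneg u

lemma aestronglyMeasurable_sobolevDensity_smul [MeasurableSpace E] [OpensMeasurableSpace E]
    {μ : Measure E} {p : ℝ} (hp : 0 ≤ p) {W ψ : E → ℝ} {u : E → F}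
    (hψ : ContDiff ℝ 1 ψ) (hu : ContDiff ℝ 1 u)
    (hmeas : AEStronglyMeasurable (sobolevDensity p W u) μ) :
    AEStronglyMeasurable (sobolevDensity p W (ψ • u)) μ := by
  have hgrad {f : E → F} (hf : ContDiff ℝ 1 f) :
      AEStronglyMeasurable (fun x => ‖fderiv ℝ f x‖ ^ p) μ :=
    ((hf.continuous_fderiv one_ne_zero).norm.rpow_const fun _ => .inr hp).aestronglyMeasurable
  have hψp : AEStronglyMeasurable (fun x => |ψ x| ^ p) μ :=
    (hψ.continuous.abs.rpow_const fun _ => .inr hp).aestronglyMeasurable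
  -- Only the density of `u` is known to be measurable, so `W * ‖u‖ ^ p` is expressed through it.
  refine ((hgrad (hψ.smul hu)).add (hψp.mul (hmeas.sub (hgrad hu)))).congr (.of_forall fun x => ?_)
  simp only [sobolevDensity, Pi.add_apply, Pi.mul_apply, Pi.sub_apply, Pi.smul_apply', norm_smul,
    Real.norm_eq_abs, Real.mul_rpow (abs_nonneg _) (norm_nonneg _), add_sub_cancel_left]
  rw [mul_left_comm]

lemma integrable_sobolevDensity_smul [MeasurableSpace E] [OpensMeasurableSpace E]
    {μ : Measure E} {p c A B : ℝ} (hp : 0 ≤ p) (hc : 0 < c) {W ψ : E → ℝ} {u : E → F}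
    (hW : ∀ᵐ x ∂μ, c ≤ W x) (hu : ContDiff ℝ 1 u) (hint : Integrable (sobolevDensity p W u) μ)
    (hψ : ContDiff ℝ 1 ψ) (hψA : ∀ x, |ψ x| ≤ A) (hψB : ∀ x, ‖fderiv ℝ ψ x‖ ≤ B) :
    Integrable (sobolevDensity p W (ψ • u)) μ :=
  (hint.const_mul _).mono' (aestronglyMeasurable_sobolevDensity_smul hp hψ hu hint.1) <|
    hW.mono fun x hx => norm_sobolevDensity_smul_le_of_bound hp hc hx
      (hψ.differentiable one_ne_zero x) (hu.differentiable one_ne_zero x) (hψA x) (hψB x)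

lemma tendsto_integral_sobolevDensity_smul [MeasurableSpace E] [OpensMeasurableSpace E]
    {μ : Measure E} {p c A B : ℝ} (hp : 0 < p) (hc : 0 < c) {W : E → ℝ} {ψ : ℕ → E → ℝ}
    {u : E → F} (hW : ∀ᵐ x ∂μ, c ≤ W x) (hu : ContDiff ℝ 1 u)
    (hint : Integrable (sobolevDensity p W u) μ) (hψ : ∀ n, ContDiff ℝ 1 (ψ n))
    (hψA : ∀ n x, |ψ n x| ≤ A) (hψB : ∀ n x, ‖fderiv ℝ (ψ n) x‖ ≤ B)
    (hψ_lim : ∀ x, Tendsto (ψ · x) atTop (𝓝 0))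
    (hψ_deriv_lim : ∀ x, Tendsto (fun n => ‖fderiv ℝ (ψ n) x‖) atTop (𝓝 0)) :
    Tendsto (fun n => ∫ x, sobolevDensity p W (ψ n • u) x ∂μ) atTop (𝓝 0) := by
  have hψ_diff n : Differentiable ℝ (ψ n) := (hψ n).differentiable one_ne_zero
  have hu_diff : Differentiable ℝ u := hu.differentiable one_ne_zero
  have hbound n : ∀ᵐ x ∂μ, ‖sobolevDensity p W (ψ n • u) x‖ ≤
      2 ^ p * (A ^ p + B ^ p / c) * sobolevDensity p W u x :=
    hW.mono fun x hx => norm_sobolevDensity_smul_le_of_bound hp.le hc hx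
      (hψ_diff n x) (hu_diff x) (hψA n x) (hψB n x)
  have hfactor x :
      Tendsto (fun n => 2 ^ p * (|ψ n x| ^ p + ‖fderiv ℝ (ψ n) x‖ ^ p / c)) atTop (𝓝 0) := by
    simpa only [abs_zero, Real.zero_rpow hp.ne', zero_div, add_zero, mul_zero] using
      (((hψ_lim x).abs.rpow_const (.inr hp.le)).add
        (((hψ_deriv_lim x).rpow_const (.inr hp.le)).div_const c)).const_mul (2 ^ p)
  have hlim : ∀ᵐ x ∂μ, Tendsto (fun n => sobolevDensity p W (ψ n • u) x) atTop (𝓝 0) := by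
    filter_upwards [hW] with x hx
    exact squeeze_zero (fun n => sobolevDensity_nonneg (hc.le.trans hx) _)
      (fun n => sobolevDensity_smul_le hp.le hc hx (hψ_diff n x) (hu_diff x))
      (by simpa only [zero_mul] using (hfactor x).mul_const (sobolevDensity p W u x))
  simpa only [integral_zero] using tendsto_integral_of_dominated_convergence _
    (fun n => aestronglyMeasurable_sobolevDensity_smul hp.le (hψ n) hu hint.1)
    (hint.const_mul _) hbound hlim

lemma exists_contDiff_cutoff [FiniteDimensional ℝ E] (R : ℝ) {δ : ℝ} (hδ : 0 < δ) :
    ∃ φ : E → ℝ, ContDiff ℝ ∞ φ ∧ HasCompactSupport φ ∧ (∀ x, φ x ∈ Icc 0 1) ∧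
      (∀ x, ‖x‖ ≤ R → φ x = 1) ∧ ∀ x, ‖fderiv ℝ φ x‖ ≤ δ := by
  let b : ContDiffBump (0 : E) := ⟨1, 2, one_pos, one_lt_two⟩
  obtain ⟨C, hC⟩ := (b.hasCompactSupport.fderiv ℝ).exists_bound_of_continuous
    (b.contDiff (n := 1) |>.continuous_fderiv one_ne_zero)
  obtain ⟨t, ⟨htR, htC⟩, ht⟩ : ∃ t : ℝ, (t * R < 1 ∧ t * C < δ) ∧ 0 < t := by
    have hsmall (a : ℝ) {η : ℝ} (hη : 0 < η) : ∀ᶠ t : ℝ in 𝓝[>] 0, t * a < η :=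
      ((continuous_mul_const a).tendsto' 0 0 (zero_mul a)).mono_left nhdsWithin_le_nhds
        |>.eventually_lt_const hη
    exact (((hsmall R one_pos).and (hsmall C hδ)).and self_mem_nhdsWithin).exists
  refine ⟨fun x => b (t • x), b.contDiff.comp (contDiff_const_smul t),
    b.hasCompactSupport.comp_smul ht.ne', fun x => ⟨b.nonneg, b.le_one⟩, fun x hx => ?_,
    fun x => ?_⟩
  · refine b.one_of_mem_closedBall (mem_closedBall_zero_iff.2 ?_)
    rw [norm_smul, Real.norm_of_nonneg ht.le]
    exact (mul_le_mul_of_nonneg_left hx ht.le).trans htR.le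
  · rw [fderiv_comp_smul, norm_smul, Real.norm_of_nonneg ht.le]
    exact (mul_le_mul_of_nonneg_left (hC _) ht.le).trans htC.le

lemma exists_cutoff_seq [FiniteDimensional ℝ E] :
    ∃ φ : ℕ → E → ℝ, (∀ n, ContDiff ℝ ∞ (φ n)) ∧ (∀ n, HasCompactSupport (φ n)) ∧
      (∀ n x, φ n x ∈ Icc 0 1) ∧ (∀ n x, ‖fderiv ℝ (φ n) x‖ ≤ 1) ∧
      (∀ x, Tendsto (φ · x) atTop (𝓝 1)) ∧
      ∀ x, Tendsto (fun n => ‖fderiv ℝ (φ n) x‖) atTop (𝓝 0) := by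
  choose φ hφ hφ_supp hφ_mem hφ_one hφ_deriv using fun n : ℕ =>
    exists_contDiff_cutoff (E := E) n (Nat.one_div_pos_of_nat (α := ℝ) (n := n))
  refine ⟨φ, hφ, hφ_supp, hφ_mem, fun n x => (hφ_deriv n x).trans ?_, fun x => ?_, fun x => ?_⟩
  · simpa using Nat.one_div_le_one_div (α := ℝ) n.zero_le
  · refine tendsto_const_nhds.congr' ?_
    filter_upwards [eventually_ge_atTop ⌈‖x‖⌉₊] with n hn
    exact (hφ_one n x (Nat.ceil_le.1 hn)).symm
  · exact squeeze_zero (fun _ => norm_nonneg _) (hφ_deriv · x)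
      tendsto_one_div_add_atTop_nhds_zero_nat

theorem density_compact_support_general [FiniteDimensional ℝ E] [MeasurableSpace E]
    [OpensMeasurableSpace E] {μ : Measure E} {p c : ℝ} (hp : 0 < p) (hc : 0 < c) {W : E → ℝ}
    (hW : ∀ᵐ x ∂μ, c ≤ W x) {k : ℕ∞} (hk : 1 ≤ k) {u : E → F} (hu : ContDiff ℝ k u)
    (hint : Integrable (sobolevDensity p W u) μ) {ε : ℝ} (hε : 0 < ε) :
    ∃ w : E → F, ContDiff ℝ k w ∧ HasCompactSupport w ∧
      Integrable (sobolevDensity p W (u - w)) μ ∧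
      ∫ x, sobolevDensity p W (u - w) x ∂μ < ε := by
  obtain ⟨φ, hφ, hφ_supp, hφ_mem, hφ_deriv, hφ_lim, hφ_deriv_lim⟩ := exists_cutoff_seq (E := E)
  have hu_one : ContDiff ℝ 1 u := hu.of_le (mod_cast hk)
  have hψ n : ContDiff ℝ 1 (1 - φ n) := contDiff_const.sub ((hφ n).of_le (mod_cast le_top))
  have hψ_le n x : |(1 - φ n) x| ≤ 1 :=
    (abs_of_nonneg (sub_nonneg.2 (hφ_mem n x).2)).trans_le (sub_le_self 1 (hφ_mem n x).1)
  have hψ_deriv n x : ‖fderiv ℝ (1 - φ n) x‖ = ‖fderiv ℝ (φ n) x‖ := by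
    change ‖fderiv ℝ (fun y => 1 - φ n y) x‖ = _
    rw [fderiv_const_sub, norm_neg]
  have hψ_deriv_le n x : ‖fderiv ℝ (1 - φ n) x‖ ≤ 1 := (hψ_deriv n x).trans_le (hφ_deriv n x)
  have hlim := tendsto_integral_sobolevDensity_smul hp hc hW hu_one hint hψ hψ_le hψ_deriv_le
    (fun x => by simpa using (hφ_lim x).const_sub 1)
    (fun x => by simpa only [hψ_deriv] using hφ_deriv_lim x)
  obtain ⟨n, hn⟩ := (hlim.eventually_lt_const hε).exists
  have hsub : u - φ n • u = (1 - φ n) • u := by rw [sub_smul, one_smul]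
  refine ⟨φ n • u, ((hφ n).of_le (mod_cast le_top)).smul hu, (hφ_supp n).smul_right, ?_, ?_⟩
  · rw [hsub]
    exact integrable_sobolevDensity_smul hp.le hc hW hu_one hint (hψ n) (hψ_le n) (hψ_deriv_le n)
  · rwa [hsub]

end

/-- **Density of compactly supported functions in `H¹(ℝ; V)`** (cf. the proof of Lemma 3.2
and [Ho19, Lemma 3.9]). Any `C¹` function of finite weighted `H¹`-norm can be approximated
in that norm by compactly supported `C¹` functions. -/
theorem density_compact_support (V : ℝ → ℝ) (hmeas : Measurable V)
    (hloc : LocallyIntegrable V) (hpos : ∀ᵐ x ∂(volume : Measure ℝ), 0 ≤ V x)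
    (u : ℝ → ℝ) (hu : ContDiff ℝ 1 u)
    (hint : Integrable (fun x => (deriv u x) ^ 2 + (1 + V x) * (u x) ^ 2)) :
    ∀ ε : ℝ, 0 < ε → ∃ w : ℝ → ℝ, ContDiff ℝ 1 w ∧ HasCompactSupport w ∧
      (∫ x, ((deriv u x - deriv w x) ^ 2 + (1 + V x) * (u x - w x) ^ 2)) < ε := by
  intro ε hε
  simp only [← sobolevDensity_two_real (fun x => 1 + V x)] at hint
  obtain ⟨w, hw, hw_supp, -, hlt⟩ := density_compact_support_general two_pos one_pos
    (hpos.mono fun _ => le_add_of_nonneg_right) le_rfl hu hint hε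
  refine ⟨w, hw, hw_supp, ?_⟩
  simpa only [sobolevDensity_two_real, Pi.sub_apply, deriv_sub (hu.differentiable one_ne_zero _)
    (hw.differentiable one_ne_zero _)] using hlt
end

section
/- (Upper semicontinuity of the infimum of the Rayleigh quotient under form-norm approximation of domains; first half of the paper's Lemma A.3.) Let W and H be real Hilbert spaces and let ι : W → H be an injective continuous linear map with ‖ι u‖_H ≤ ‖u‖_W for all u ∈ W. For a subspace D ⊆ W define λ(D) := inf { (‖u‖_W² − ‖ι u‖_H²) / ‖ι u‖_H² : u ∈ D, u ≠ 0 } ∈ [0, ∞] (with inf ∅ = ∞). Let D ⊆ W and D_n ⊆ W (n ∈ ℕ) be subspaces such that for every u ∈ D there exists a sequence (u_n) with u_n ∈ D_n for each n and ‖u_n − u‖_W → 0. Then limsup_{n→∞} λ(D_n) ≤ λ(D). -/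
open Filter Topology
open scoped ENNReal

/-- The infimum of the Rayleigh quotient `(‖u‖_W² - ‖ι u‖_H²) / ‖ι u‖_H²` over nonzero
elements of the subspace `D ⊆ W`, with `inf ∅ = ∞`. Here `‖u‖_W² = a(u) + ‖ι u‖_H²` for a
closed nonnegative form `a`, so this is the infimum of the spectrum on the domain `D`. -/
noncomputable def lamD {W H : Type*} [NormedAddCommGroup W] [InnerProductSpace ℝ W]
    [NormedAddCommGroup H] [InnerProductSpace ℝ H]
    (ι : W →L[ℝ] H) (D : Submodule ℝ W) : ℝ≥0∞ :=
  sInf {e : ℝ≥0∞ | ∃ u ∈ D, u ≠ 0 ∧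
    e = ENNReal.ofReal ((‖u‖ ^ 2 - ‖ι u‖ ^ 2) / ‖ι u‖ ^ 2)}

/-!
The quotient `R` is continuous at every `u` with `ι u ≠ 0`. If `u_n → u ≠ 0` with `u_n ∈ D_n`, then
eventually `u_n ≠ 0`, so `λ(D_n) ≤ R[u_n] → R[u]`; now take the infimum over `u ∈ D`. This is an
instance of a general fact: if `D` lies in the Kuratowski lower limit of the `D_n`, then the infima
over `D_n` of an upper semicontinuous function have limsup at most its infimum over `D`.
-/

section KuratowskiLiminf

variable {X α : Type*} [TopologicalSpace X] {l : Filter α} {s : α → Set X}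

/-- The Kuratowski lower limit (inner limit) of a family of sets `s` along a filter `l`. It encodes
the approximation half of Mosco convergence. Neighbourhoods are used instead of sequences, so that
no countability of `X` or `l` is required. -/
def kuratowskiLiminf (l : Filter α) (s : α → Set X) : Set X :=
  {x | ∀ U ∈ 𝓝 x, ∀ᶠ a in l, (s a ∩ U).Nonempty}

lemma mem_kuratowskiLiminf_of_tendsto {v : α → X} {x : X} (hv : ∀ᶠ a in l, v a ∈ s a)
    (hvx : Tendsto v l (𝓝 x)) : x ∈ kuratowskiLiminf l s := by
  intro U hU
  filter_upwards [hv, hvx hU] with a hs hUa using ⟨v a, hs, hUa⟩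

lemma kuratowskiLiminf_inter_subset_of_isOpen {O : Set X} (hO : IsOpen O) :
    kuratowskiLiminf l s ∩ O ⊆ kuratowskiLiminf l fun a ↦ s a ∩ O := by
  rintro x ⟨hx, hxO⟩ U hU
  filter_upwards [hx _ (inter_mem (hO.mem_nhds hxO) hU)] with a ha
  rwa [Set.inter_assoc]

lemma limsup_biInf_le_biInf {β : Type*} [CompleteLinearOrder β] {f : X → β} {t : Set X}
    (hst : t ⊆ kuratowskiLiminf l s) (hf : ∀ x ∈ t, UpperSemicontinuousAt f x) :
    limsup (fun a ↦ ⨅ x ∈ s a, f x) l ≤ ⨅ x ∈ t, f x := by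
  refine le_iInf₂ fun x hx ↦ (limsup_le_iff).2 fun c hc ↦ ?_
  filter_upwards [hst hx _ (hf x hx c hc)] with a ⟨y, hys, hyc⟩
  exact (iInf₂_le y hys).trans_lt hyc

end KuratowskiLiminf

/-- The Rayleigh quotient `R[u] = a(u) / ‖ι u‖²` of the form `a(u) = ‖u‖² - ‖ι u‖²`, with the
junk value `0` where `‖ι u‖ = 0`. -/
noncomputable def formRayleighQuotient {W H : Type*} [Norm W] [Norm H] (ι : W → H) (u : W) : ℝ :=
  (‖u‖ ^ 2 - ‖ι u‖ ^ 2) / ‖ι u‖ ^ 2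

lemma continuousAt_formRayleighQuotient {W H : Type*} [SeminormedAddGroup W]
    [SeminormedAddGroup H] {ι : W → H} {u : W} (hι : ContinuousAt ι u) (hu : ‖ι u‖ ≠ 0) :
    ContinuousAt (formRayleighQuotient ι) u :=
  ((continuous_norm.continuousAt.pow 2).sub (hι.norm.pow 2)).div (hι.norm.pow 2)
    (pow_ne_zero 2 hu)

section LamD

variable {W H : Type*} [NormedAddCommGroup W] [InnerProductSpace ℝ W]
  [NormedAddCommGroup H] [InnerProductSpace ℝ H]

lemma lamD_eq_biInf (ι : W →L[ℝ] H) (D : Submodule ℝ W) :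
    lamD ι D = ⨅ u ∈ (D : Set W) ∩ {0}ᶜ, ENNReal.ofReal (formRayleighQuotient ι u) := by
  rw [lamD, ← sInf_image]
  congr 1
  ext e
  simp [formRayleighQuotient, and_assoc, eq_comm]

theorem limsup_lamD_le_general {α : Type*} {l : Filter α} (ι : W →L[ℝ] H)
    (hinj : Function.Injective ι) {D : Submodule ℝ W} {Dn : α → Submodule ℝ W}
    (hD : (D : Set W) ⊆ kuratowskiLiminf l fun n ↦ (Dn n : Set W)) :
    limsup (fun n ↦ lamD ι (Dn n)) l ≤ lamD ι D := by
  simp only [lamD_eq_biInf]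
  have hD_ne_zero :
      (D : Set W) ∩ {0}ᶜ ⊆ kuratowskiLiminf l fun n ↦ (Dn n : Set W) ∩ {0}ᶜ :=
    (Set.inter_subset_inter_left _ hD).trans
      (kuratowskiLiminf_inter_subset_of_isOpen isOpen_compl_singleton)
  refine limsup_biInf_le_biInf hD_ne_zero fun u ⟨_, hu⟩ ↦ ?_
  have hιu : ‖ι u‖ ≠ 0 := norm_ne_zero_iff.2 ((map_ne_zero_iff ι hinj).2 hu)
  have hR : ContinuousAt (formRayleighQuotient ι) u :=
    continuousAt_formRayleighQuotient ι.continuous.continuousAt hιu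
  exact (ENNReal.continuous_ofReal.continuousAt.comp hR).upperSemicontinuousAt

end LamD

/-- **First half of Lemma A.3 (abstract form).** If every `u ∈ D` can be approximated in
form norm by elements `u_n ∈ D_n`, then `limsup_n λ(D_n) ≤ λ(D)`. -/
theorem limsup_lamD_le {W H : Type*} [NormedAddCommGroup W] [InnerProductSpace ℝ W]
    [CompleteSpace W] [NormedAddCommGroup H] [InnerProductSpace ℝ H] [CompleteSpace H]
    (ι : W →L[ℝ] H) (hinj : Function.Injective ι) (hcontr : ∀ u : W, ‖ι u‖ ≤ ‖u‖)
    (D : Submodule ℝ W) (Dn : ℕ → Submodule ℝ W)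
    (happrox : ∀ u ∈ D, ∃ v : ℕ → W, (∀ n, v n ∈ Dn n) ∧
      Tendsto (fun n => ‖v n - u‖) atTop (𝓝 0)) :
    Filter.limsup (fun n => lamD ι (Dn n)) atTop ≤ lamD ι D := by
  refine limsup_lamD_le_general ι hinj fun u hu ↦ ?_
  obtain ⟨v, hv, hvu⟩ := happrox u hu
  exact mem_kuratowskiLiminf_of_tendsto (.of_forall hv) (tendsto_iff_norm_sub_tendsto_zero.2 hvu)
end
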